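/- arXiv:2308.09384 — 3 statements merged into one kernel-verified Lean document; each statement's English description precedes it below -/
import Mathlib

section
/- Let K be a field, B = K[x_1,…,x_n] with n > 0, and φ: B → B a K-algebra automorphism. Then deg(φ^{-1}) ≤ deg(φ)^{n−1}. -/
/-- The degree of a `K`-algebra endomorphism `φ` of the polynomial ring `K[x_1, …, x_n]`:
`deg(φ) = max {deg f_1, …, deg f_n}` where `f_i = φ(x_i)` and `deg` is total degree. -/
noncomputable def polyDeg {K : Type*} [CommSemiring K] {n : ℕ}
    (φ : MvPolynomial (Fin n) K →ₐ[K] MvPolynomial (Fin n) K) : ℕ :=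
  Finset.univ.sup fun i : Fin n => (φ (MvPolynomial.X i)).totalDegree

section Helpers
open MvPolynomial

lemma totalDegree_aeval_le_mul {K : Type*} [Field K] {σ τ : Type*} (h : σ → MvPolynomial τ K) (d : ℕ)
    (hd : ∀ j, (h j).totalDegree ≤ d) (q : MvPolynomial σ K) :
    (aeval h q).totalDegree ≤ d * q.totalDegree := by
  classical
  rw [aeval_def, eval₂_eq]
  refine totalDegree_finsetSum_le fun s hs => ?_
  refine (totalDegree_mul _ _).trans ?_
  rw [algebraMap_eq, totalDegree_C, zero_add]
  refine (totalDegree_finsetProd _ _).trans ?_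
  refine le_trans ?_ (Nat.mul_le_mul_left d (le_totalDegree hs))
  rw [Finsupp.sum, Finset.mul_sum]
  refine Finset.sum_le_sum fun i _ => (totalDegree_pow _ _).trans ?_
  rw [mul_comm]
  exact Nat.mul_le_mul_right _ (hd i)

lemma finrank_restrictTotalDegree (K : Type*) [Field K] (n m : ℕ) :
    Module.finrank K (restrictTotalDegree (Fin n) K m) = (m + n).choose n := by
  classical
  have hset : {s : Fin n →₀ ℕ | s.sum (fun _ e ↦ e) ≤ m} =
      ((Finset.range (m+1)).biUnion
        (fun j => Finset.finsuppAntidiag (Finset.univ : Finset (Fin n)) j) : Finset _) := by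
    ext s
    simp [Finset.mem_finsuppAntidiag, Finsupp.sum_fintype]
  have := Module.finrank_eq_nat_card_basis (basisRestrictSupport K {s : Fin n →₀ ℕ | s.sum (fun _ e ↦ e) ≤ m})
  rw [restrictTotalDegree, this, hset]
  rw [SetLike.coe_sort_coe, Nat.card_eq_fintype_card, Fintype.card_coe, Finset.card_biUnion]
  · simp only [Finset.card_finsuppAntidiag_nat_eq_multichoose, Finset.card_univ, Fintype.card_fin]
    rw [Nat.sum_range_multichoose]
  · intro i _ j _ hij
    rw [Function.onFun, Finset.disjoint_left]
    intro s hs ht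
    simp [Finset.mem_finsuppAntidiag] at hs ht
    omega

lemma X_dvd_of_aeval {K : Type*} [Field K] {k : ℕ} (i : Fin (k+1)) (p : MvPolynomial (Fin (k+1)) K)
    (hp : aeval (i.insertNth (0 : MvPolynomial (Fin k) K) X) p = 0) : X i ∣ p := by
  let π := Ideal.Quotient.mkₐ K (Ideal.span {(X i : MvPolynomial (Fin (k+1)) K)})
  have h : π = (π.comp (rename i.succAbove)).comp (aeval (i.insertNth (0 : MvPolynomial (Fin k) K) X)) := by
    ext j
    refine Fin.succAboveCases i ?_ (fun j => ?_) j
    · simp [π, Ideal.Quotient.eq_zero_iff_mem, Ideal.mem_span_singleton]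
    · simp [π]
  have h2 := congrArg (fun f => f p) h
  simp only [AlgHom.comp_apply, hp, map_zero] at h2
  simpa [π, Ideal.Quotient.eq_zero_iff_mem, Ideal.mem_span_singleton] using h2

lemma choose_ineq (k e m : ℕ) :
   (m + e + (k+1)).choose (k+1) ≥ (m + (k+1)).choose (k+1) + e * (m + k).choose k := by
  induction e with
  | zero => simp
  | succ e ih =>
    have : (m + (e+1) + (k+1)).choose (k+1) = (m + e + (k+1)).choose k + (m + e + (k+1)).choose (k+1) := by
      rw [show m + (e+1) + (k+1) = (m + e + (k+1)) + 1 by ring, Nat.choose_succ_succ]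
    have h2 : (m+k).choose k ≤ (m + e + (k+1)).choose k := Nat.choose_le_choose _ (by omega)
    rw [this, add_mul]; omega

lemma le_of_asymp (k e d : ℕ) (h : ∀ m : ℕ, e * (m + k).choose k ≤ (d * (m + e) + k).choose k) :
    e ≤ d ^ k := by
  have h1 : ∀ m : ℕ, e * m ^ k ≤ (d * (m + e) + k) ^ k := by
    intro m
    calc e * m ^ k ≤ e * (m+1).ascFactorial k := by
            gcongr
            exact (Nat.pow_le_pow_left (Nat.le_succ m) k).trans (Nat.pow_succ_le_ascFactorial _ _)
      _ = k.factorial * (e * (m + k).choose k) := by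
            rw [Nat.ascFactorial_eq_factorial_mul_choose]; ring
      _ ≤ k.factorial * (d * (m + e) + k).choose k := Nat.mul_le_mul_left _ (h m)
      _ = (d * (m + e) + 1).ascFactorial k := by rw [Nat.ascFactorial_eq_factorial_mul_choose]
      _ ≤ _ := Nat.ascFactorial_le_pow_add _ _
  have h2 : ∀ m : ℕ, 0 < m → (e : ℝ) ≤ (d + (d * e + k : ℕ) / (m : ℝ)) ^ k := by
    intro m hm
    have hm' : (0 : ℝ) < m := by exact_mod_cast hm
    have h3 : ((e * m ^ k : ℕ) : ℝ) ≤ ((d * (m + e) + k) ^ k : ℕ) := by exact_mod_cast h1 m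
    have h4 : (d + (d * e + k : ℕ) / (m : ℝ)) = (d * (m + e) + k) / m := by
      push_cast; field_simp; ring
    rw [h4, div_pow, le_div_iff₀ (by positivity)]
    exact_mod_cast h3
  have ht : Filter.Tendsto (fun m : ℕ => ((d : ℝ) + (d * e + k : ℕ) / (m : ℝ)) ^ k) Filter.atTop (nhds (((d:ℝ) + 0) ^ k)) :=
    ((tendsto_const_div_atTop_nhds_zero_nat _).const_add _).pow k
  have := ge_of_tendsto ht (Filter.eventually_atTop.2 ⟨1, fun m hm => h2 m hm⟩)
  rw [add_zero] at this
  exact_mod_cast this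

lemma main_ineq {K : Type*} [Field K] {k : ℕ} (φ : MvPolynomial (Fin (k+1)) K ≃ₐ[K] MvPolynomial (Fin (k+1)) K)
    (d : ℕ) (hd : ∀ j, (φ (X j)).totalDegree ≤ d) (i : Fin (k+1)) (m : ℕ) :
    (m + (φ.symm (X i)).totalDegree + (k+1)).choose (k+1) ≤ (m + (k+1)).choose (k+1) +
      (d * (m + (φ.symm (X i)).totalDegree) + k).choose k := by
  set g := φ.symm (X i) with hg
  set e := g.totalDegree with he
  have hg0 : g ≠ 0 := by
    rw [hg, Ne, EmbeddingLike.map_eq_zero_iff]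
    exact X_ne_zero i
  let ψ : MvPolynomial (Fin (k+1)) K →ₐ[K] MvPolynomial (Fin k) K := aeval (i.insertNth (0 : MvPolynomial (Fin k) K) X)
  have hψ : ∀ p, (ψ p).totalDegree ≤ p.totalDegree := by
    intro p
    refine (totalDegree_aeval_le_mul _ 1 (fun j => ?_) p).trans (by simp)
    refine Fin.succAboveCases i ?_ (fun j => ?_) j <;> simp
  have hφ : ∀ p, (φ p).totalDegree ≤ d * p.totalDegree := by
    intro p
    have := totalDegree_aeval_le_mul (fun j => φ (X j)) d hd p
    have h2 : aeval (fun j => φ (X j)) = φ.toAlgHom := by ext j; simp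
    rw [h2] at this
    exact this
  let L : restrictTotalDegree (Fin (k+1)) K (m+e) →ₗ[K] restrictTotalDegree (Fin k) K (d * (m+e)) :=
    ((ψ.comp φ.toAlgHom).toLinearMap).restrict (fun p hp => by
      rw [mem_restrictTotalDegree] at hp ⊢
      exact (hψ _).trans ((hφ p).trans (Nat.mul_le_mul_left d hp)))
  have h1 := LinearMap.finrank_range_add_finrank_ker L
  have h2 := Submodule.finrank_le (LinearMap.range L)
  have h3 : Module.finrank K (LinearMap.ker L) ≤ Module.finrank K (restrictTotalDegree (Fin (k+1)) K m) := by
    have hle : (LinearMap.ker L).map (restrictTotalDegree (Fin (k+1)) K (m+e)).subtype ≤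
        (restrictTotalDegree (Fin (k+1)) K m).map (LinearMap.mulLeft K g) := by
      rintro _ ⟨⟨p, hp⟩, hpL, rfl⟩
      have hz : ψ (φ p) = 0 := congrArg Subtype.val (LinearMap.mem_ker.1 hpL)
      obtain ⟨q, hq⟩ := X_dvd_of_aeval i _ hz
      have hpq : p = g * φ.symm q := by
        rw [hg, ← map_mul, ← hq, AlgEquiv.symm_apply_apply]
      refine ⟨φ.symm q, ?_, hpq.symm⟩
      rw [SetLike.mem_coe, mem_restrictTotalDegree]
      by_cases hq0 : φ.symm q = 0
      · simp [hq0]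
      rw [mem_restrictTotalDegree, hpq, totalDegree_mul_of_isDomain hg0 hq0] at hp
      omega
    rw [(Submodule.equivMapOfInjective _
      (restrictTotalDegree (Fin (k+1)) K (m+e)).injective_subtype (LinearMap.ker L)).finrank_eq]
    exact (Submodule.finrank_mono hle).trans (Submodule.finrank_map_le _ _)
  rw [finrank_restrictTotalDegree] at h1 h2 h3
  omega

end Helpers

theorem polynomial_automorphism_inverse_degree_bound (K : Type*) [Field K] (n : ℕ)
    (hn : 0 < n) (φ : MvPolynomial (Fin n) K ≃ₐ[K] MvPolynomial (Fin n) K) :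
    polyDeg φ.symm.toAlgHom ≤ polyDeg φ.toAlgHom ^ (n - 1) := by
  obtain ⟨k, rfl⟩ : ∃ k, n = k + 1 := ⟨n - 1, by omega⟩
  refine Finset.sup_le fun i _ => ?_
  rw [Nat.add_sub_cancel]
  refine le_of_asymp _ _ _ fun m => ?_
  have h1 := main_ineq φ (polyDeg φ.toAlgHom) (fun j => Finset.le_sup (f := fun i => (φ.toAlgHom (MvPolynomial.X i)).totalDegree) (Finset.mem_univ j)) i m
  have h2 := choose_ineq k (φ.symm (MvPolynomial.X i)).totalDegree m
  have h3 := h2.le.trans h1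
  exact Nat.le_of_add_le_add_left h3
end

section
/- Let K be a field, B = K[x_1,…,x_n] with n > 0, and φ: B → B a K-algebra endomorphism with φ(x_i) = f_i, where f_1, …, f_n are algebraically independent over K; let A = φ(B). Let g ∈ B be an element of total degree D that is integral over A, with minimal polynomial G = a_0 + a_1 T + ⋯ + a_{r−1} T^{r−1} + T^r over the fraction field K(A). Then each coefficient a_i lies in φ(B_{≤m}), where m = 2^n deg(φ)^{n−1} (n + D·deg(φ)^n). -/
open MvPolynomial in
/-- The fraction field `K(A)` of the image `A = φ(B)` of a polynomial endomorphism `φ`,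
realized as the subfield of `K(B) = FractionRing B` generated by the image of `A`. -/
noncomputable def imageFractionSubfield {K : Type*} [Field K] {n : ℕ}
    (φ : MvPolynomial (Fin n) K →ₐ[K] MvPolynomial (Fin n) K) :
    Subfield (FractionRing (MvPolynomial (Fin n) K)) :=
  Subfield.closure
    (algebraMap (MvPolynomial (Fin n) K) (FractionRing (MvPolynomial (Fin n) K)) ''
      (φ.range : Set (MvPolynomial (Fin n) K)))

namespace PMPB

open MvPolynomial

/-- Swap `K[y][T]` to `K[T][y]`. -/
noncomputable def swp (K : Type*) [Field K] (n : ℕ) :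
    Polynomial (MvPolynomial (Fin n) K) →+* MvPolynomial (Fin n) (Polynomial K) :=
  Polynomial.eval₂RingHom (MvPolynomial.map Polynomial.C) (MvPolynomial.C Polynomial.X)

lemma swp_coeff {K : Type*} [Field K] {n : ℕ} (P : Polynomial (MvPolynomial (Fin n) K))
    (m : Fin n →₀ ℕ) (i : ℕ) : ((swp K n P).coeff m).coeff i = (P.coeff i).coeff m := by
  induction P using Polynomial.induction_on' with
  | add p q hp hq => simp [hp, hq]
  | monomial k a =>
    simp only [swp, Polynomial.coe_eval₂RingHom, Polynomial.eval₂_monomial]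
    rw [← map_pow, mul_comm, MvPolynomial.coeff_C_mul, MvPolynomial.coeff_map,
      mul_comm, Polynomial.coeff_C_mul, Polynomial.coeff_X_pow, Polynomial.coeff_monomial]
    by_cases h : i = k
    · simp [h]
    · simp [h, Ne.symm h]

lemma totalDegree_le_iff' {R : Type*} [CommSemiring R] {n : ℕ} (p : MvPolynomial (Fin n) R)
    (M : ℕ) : p.totalDegree ≤ M ↔ ∀ m, p.coeff m ≠ 0 → (m.sum fun _ e => e) ≤ M := by
  simp [MvPolynomial.totalDegree, Finset.sup_le_iff]

lemma swp_totalDegree_le {K : Type*} [Field K] {n : ℕ} (P : Polynomial (MvPolynomial (Fin n) K))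
    (M : ℕ) : (swp K n P).totalDegree ≤ M ↔ ∀ i, (P.coeff i).totalDegree ≤ M := by
  simp only [totalDegree_le_iff']
  constructor
  · intro h i m hm
    refine h m fun h0 => hm ?_
    rw [← swp_coeff, h0, Polynomial.coeff_zero]
  · intro h m hm
    by_contra hlt
    refine hm (Polynomial.ext fun i => ?_)
    rw [swp_coeff, Polynomial.coeff_zero]
    by_contra h0
    exact hlt (h i m h0)

lemma swp_injective {K : Type*} [Field K] {n : ℕ} : Function.Injective (swp K n) := by
  intro P Q h
  ext i m
  rw [← swp_coeff, ← swp_coeff, h]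

lemma coeff_bound_of_dvd {K : Type*} [Field K] {n : ℕ}
    {G P : Polynomial (MvPolynomial (Fin n) K)} (hP : P ≠ 0) (h : G ∣ P) {M : ℕ}
    (hM : ∀ i, (P.coeff i).totalDegree ≤ M) (i : ℕ) : (G.coeff i).totalDegree ≤ M := by
  obtain ⟨H, rfl⟩ := h
  have hG : G ≠ 0 := left_ne_zero_of_mul hP
  have hH : H ≠ 0 := right_ne_zero_of_mul hP
  refine (swp_totalDegree_le G M).1 ?_ i
  have h1 := (swp_totalDegree_le _ M).2 hM
  rw [map_mul, totalDegree_mul_of_isDomain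
    ((map_ne_zero_iff _ swp_injective).2 hG) ((map_ne_zero_iff _ swp_injective).2 hH)] at h1
  omega

lemma field_part {K : Type*} [Field K] {n : ℕ} {F L : Type*} [Field F] [Field L] [Algebra F L]
    (ψ : MvPolynomial (Fin n) K →+* F) (hψ : Function.Injective ψ)
    (hfrac : ∀ z : F, ∃ x y, z = ψ x / ψ y) (x : L)
    (hx : ∃ Q : Polynomial (MvPolynomial (Fin n) K), Q.Monic ∧
      Q.eval₂ ((algebraMap F L).comp ψ) x = 0)
    (P : Polynomial (MvPolynomial (Fin n) K)) (hP : P ≠ 0)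
    (hPx : P.eval₂ ((algebraMap F L).comp ψ) x = 0) {M : ℕ}
    (hM : ∀ i, (P.coeff i).totalDegree ≤ M) (i : ℕ) :
    ∃ b : MvPolynomial (Fin n) K, b.totalDegree ≤ M ∧ (minpoly F x).coeff i = ψ b := by
  let : Algebra (MvPolynomial (Fin n) K) F := ψ.toAlgebra
  let : Algebra (MvPolynomial (Fin n) K) L := ((algebraMap F L).comp ψ).toAlgebra
  have : IsScalarTower (MvPolynomial (Fin n) K) F L := IsScalarTower.of_algebraMap_eq fun _ => rfl
  have : FaithfulSMul (MvPolynomial (Fin n) K) F :=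
    (faithfulSMul_iff_algebraMap_injective _ _).2 hψ
  have : FaithfulSMul (MvPolynomial (Fin n) K) L :=
    (faithfulSMul_iff_algebraMap_injective _ _).2 ((algebraMap F L).injective.comp hψ)
  have : IsFractionRing (MvPolynomial (Fin n) K) F :=
    IsFractionRing.of_field _ _ hfrac
  have hint : IsIntegral (MvPolynomial (Fin n) K) x := hx
  have hd : minpoly (MvPolynomial (Fin n) K) x ∣ P := minpoly.isIntegrallyClosed_dvd hint hPx
  refine ⟨_, coeff_bound_of_dvd hP hd hM i, ?_⟩
  rw [minpoly.isIntegrallyClosed_eq_field_fractions' F hint, Polynomial.coeff_map]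
  rfl

lemma totalDegree_apply_le {K : Type*} [Field K] {n : ℕ}
    (φ : MvPolynomial (Fin n) K →ₐ[K] MvPolynomial (Fin n) K) (p : MvPolynomial (Fin n) K)
    {M : ℕ} (hp : p.totalDegree ≤ M) : (φ p).totalDegree ≤ polyDeg φ * M := by
  rw [p.as_sum, map_sum]
  refine totalDegree_finsetSum_le fun m hm => ?_
  have hm' : (m.sum fun _ e => e) ≤ M := (le_totalDegree hm).trans hp
  rw [monomial_eq, map_mul, Finsupp.prod, map_prod]
  have h1 : φ (C (coeff m p)) = C (coeff m p) := φ.commutes _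
  rw [h1]
  refine (totalDegree_mul _ _).trans ?_
  rw [totalDegree_C, zero_add]
  refine (totalDegree_finsetProd _ _).trans ?_
  calc _ ≤ ∑ i ∈ m.support, polyDeg φ * m i := by
        refine Finset.sum_le_sum fun i _ => ?_
        rw [map_pow, mul_comm]
        refine (totalDegree_pow _ _).trans (Nat.mul_le_mul_left _ ?_)
        exact Finset.le_sup (f := fun i : Fin n => (φ (MvPolynomial.X i)).totalDegree)
          (Finset.mem_univ i)
    _ = polyDeg φ * (m.sum fun _ e => e) := by rw [← Finset.mul_sum]; rfl
    _ ≤ _ := Nat.mul_le_mul_left _ hm'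

/-- exponents of total degree at most `M` -/
def expSet (n M : ℕ) : Set (Fin n →₀ ℕ) := {m | (m.sum fun _ e => e) ≤ M}

lemma expSet_finite (n M : ℕ) : (expSet n M).Finite := by
  refine (Set.finite_Iic (Finsupp.equivFunOnFinite.symm fun _ : Fin n => M)).subset ?_
  intro m hm i
  have hm : (m.sum fun _ e => e) ≤ M := hm
  rw [Finsupp.sum_fintype _ _ (fun _ => rfl)] at hm
  exact (Finset.single_le_sum (f := fun i => m i) (fun _ _ => Nat.zero_le _)
    (Finset.mem_univ i)).trans hm

lemma expSet_card (n M q : ℕ) (hq : 0 < q) :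
    Nat.card (expSet n (q * M)) ≤ q ^ n * Nat.card (expSet n M) := by
  have : Finite (expSet n M) := expSet_finite n M
  have : Nat.card ((Fin n → Fin q) × expSet n M) = q ^ n * Nat.card (expSet n M) := by
    simp [Nat.card_prod]
  rw [← this]
  refine Nat.card_le_card_of_injective
    (fun m => (fun i => ⟨m.1 i % q, Nat.mod_lt _ hq⟩,
      ⟨Finsupp.equivFunOnFinite.symm fun i => m.1 i / q, ?_⟩)) ?_
  · obtain ⟨m, hm⟩ := m
    have hm : (m.sum fun _ e => e) ≤ q * M := hm
    change (Finsupp.sum _ fun _ e => e) ≤ M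
    rw [Finsupp.sum_fintype _ _ (fun _ => rfl)] at hm ⊢
    refine Nat.le_of_mul_le_mul_left (le_trans ?_ hm) hq
    rw [Finset.mul_sum]
    exact Finset.sum_le_sum fun i _ => Nat.mul_div_le _ _
  · rintro ⟨a, ha⟩ ⟨b, hb⟩ h
    simp only [Prod.mk.injEq, Subtype.mk.injEq] at h
    refine Subtype.ext (Finsupp.ext fun i => ?_)
    have h1 := congrFun h.1 i
    have h2 := congrFun (Finsupp.equivFunOnFinite.symm.injective h.2) i
    simp only [Fin.mk.injEq] at h1
    dsimp only at h2 ⊢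
    rw [← Nat.div_add_mod (a i) q, ← Nat.div_add_mod (b i) q, h1, h2]

lemma finrank_restrict (K : Type*) [Field K] (n M : ℕ) :
    Module.finrank K (restrictTotalDegree (Fin n) K M) = Nat.card (expSet n M) :=
  Module.finrank_eq_nat_card_basis (basisRestrictSupport K (expSet n M))

lemma exists_rel {K : Type*} [Field K] {n : ℕ}
    (φ : MvPolynomial (Fin n) K →ₐ[K] MvPolynomial (Fin n) K) (g : MvPolynomial (Fin n) K)
    (hd : 0 < polyDeg φ) (hn : 0 < n) :
    ∃ P : Polynomial (MvPolynomial (Fin n) K), P ≠ 0 ∧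
      P.eval₂ (φ : MvPolynomial (Fin n) K →+* MvPolynomial (Fin n) K) g = 0 ∧
      ∀ i, (P.coeff i).totalDegree ≤ 2 ^ n * polyDeg φ ^ (n - 1) * g.totalDegree := by
  set d := polyDeg φ with hdd
  set M := 2 ^ n * d ^ (n - 1) * g.totalDegree with hM
  set s := (2 * d) ^ n with hs
  have hsM : s * g.totalDegree = d * M := by
    obtain ⟨k, rfl⟩ : ∃ k, n = k + 1 := ⟨n - 1, by omega⟩
    rw [hM, hs, mul_pow, Nat.add_sub_cancel]; ring
  let Λ0 : (Fin (s + 1) → restrictTotalDegree (Fin n) K M) →ₗ[K] MvPolynomial (Fin n) K :=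
    ∑ j : Fin (s + 1), (LinearMap.mulRight K (g ^ (j : ℕ))) ∘ₗ φ.toLinearMap ∘ₗ
      (Submodule.subtype _) ∘ₗ (LinearMap.proj j)
  have hΛ0 : ∀ c, Λ0 c = ∑ j : Fin (s + 1), φ (c j) * g ^ (j : ℕ) := by
    intro c; simp [Λ0]
  have hmem : ∀ c, Λ0 c ∈ restrictTotalDegree (Fin n) K (2 * d * M) := by
    intro c
    rw [mem_restrictTotalDegree, hΛ0]
    refine totalDegree_finsetSum_le fun j _ => ?_
    refine (totalDegree_mul _ _).trans ?_
    have h1 := totalDegree_apply_le φ _ ((mem_restrictTotalDegree _ _ _).1 (c j).2)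
    have h2 := totalDegree_pow g (j : ℕ)
    have h3 : (j : ℕ) * g.totalDegree ≤ s * g.totalDegree :=
      Nat.mul_le_mul_right _ (by omega)
    rw [← hdd] at h1
    rw [mul_assoc]
    omega
  have hker : LinearMap.ker (Λ0.codRestrict _ hmem) ≠ ⊥ := by
    apply LinearMap.ker_ne_bot_of_finrank_lt
    rw [Module.finrank_pi_fintype, Finset.sum_const, Finset.card_univ, Fintype.card_fin,
      finrank_restrict, finrank_restrict, smul_eq_mul]
    have h1 := expSet_card n M (2 * d) (by omega)
    have h2 : 0 < Nat.card (expSet n M) := by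
      have : Finite (expSet n M) := expSet_finite n M
      have : Nonempty (expSet n M) := ⟨⟨0, by simp [expSet]⟩⟩
      exact Nat.card_pos
    rw [← hs] at h1
    rw [add_mul]
    omega
  obtain ⟨c, hc, hc0⟩ := (Submodule.ne_bot_iff _).1 hker
  rw [LinearMap.ker_codRestrict, LinearMap.mem_ker, hΛ0] at hc
  let P : Polynomial (MvPolynomial (Fin n) K) :=
    ∑ j : Fin (s + 1), Polynomial.monomial (j : ℕ) (c j : MvPolynomial (Fin n) K)
  have hPc : ∀ i, P.coeff i = if h : i < s + 1 then (c ⟨i, h⟩ : MvPolynomial (Fin n) K) else 0 := by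
    intro i
    simp only [P, Polynomial.finsetSum_coeff, Polynomial.coeff_monomial]
    split_ifs with h
    · rw [Finset.sum_eq_single ⟨i, h⟩]
      · simp
      · intro b _ hb
        rw [if_neg]
        rintro rfl
        exact hb rfl
      · simp
    · refine Finset.sum_eq_zero fun j _ => if_neg ?_
      have := j.2
      omega
  refine ⟨P, ?_, ?_, ?_⟩
  · intro h0
    apply hc0
    ext1 j
    apply Subtype.ext
    have := hPc j
    rw [h0, Polynomial.coeff_zero, dif_pos j.2] at this
    exact this.symm
  · rw [← hc]
    simp only [P, Polynomial.eval₂_finsetSum, Polynomial.eval₂_monomial]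
    rfl
  · intro i
    rw [hPc]
    split_ifs with h
    · exact (mem_restrictTotalDegree _ _ _).1 (c ⟨i, h⟩).2
    · simp

lemma polyDeg_pos {K : Type*} [Field K] {n : ℕ} (hn : 0 < n)
    (φ : MvPolynomial (Fin n) K →ₐ[K] MvPolynomial (Fin n) K) (hφ : Function.Injective φ) :
    0 < polyDeg φ := by
  by_contra h
  have h0 : (φ (X ⟨0, hn⟩)).totalDegree = 0 := by
    have := Finset.le_sup (f := fun i : Fin n => (φ (MvPolynomial.X i)).totalDegree)
      (Finset.mem_univ ⟨0, hn⟩)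
    change _ ≤ polyDeg φ at this
    omega
  rw [totalDegree_eq_zero_iff_eq_C] at h0
  have h1 : φ (X ⟨0, hn⟩) = φ (C (coeff 0 (φ (X ⟨0, hn⟩)))) := by
    conv_lhs => rw [h0]
    exact (φ.commutes _).symm
  have h2 := congrArg totalDegree (hφ h1)
  simp at h2

end PMPB

open MvPolynomial in
/-- Let `K` be a field, `B = K[x_1, …, x_n]` with `n > 0`, `φ : B → B` a
`K`-algebra endomorphism with `φ(x_i) = f_i` algebraically independent over `K`, and
`A = φ(B)`.  Let `g ∈ B` be of total degree `D`, integral over `A`, with minimal polynomial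
`G = a_0 + a_1 T + ⋯ + a_{r−1} T^{r−1} + T^r` over the fraction field `K(A)`.  Then every
coefficient `a_i` lies in `φ(B_{≤m})`, where `m = 2^n deg(φ)^{n−1} (n + D·deg(φ)^n)`. -/
theorem polynomial_minimal_polynomial_coefficient_bound (K : Type*) [Field K] (n : ℕ)
    (hn : 0 < n) (φ : MvPolynomial (Fin n) K →ₐ[K] MvPolynomial (Fin n) K)
    (hind : AlgebraicIndependent K fun i => φ (X i))
    (g : MvPolynomial (Fin n) K)
    (hint : ∃ F : Polynomial (MvPolynomial (Fin n) K), F.Monic ∧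
        (∀ k, F.coeff k ∈ φ.range) ∧ Polynomial.eval g F = 0) :
    ∀ i < (minpoly (imageFractionSubfield φ)
        (algebraMap (MvPolynomial (Fin n) K) (FractionRing (MvPolynomial (Fin n) K)) g)).natDegree,
      ∃ b : MvPolynomial (Fin n) K,
        b.totalDegree ≤ 2 ^ n * polyDeg φ ^ (n - 1) * (n + g.totalDegree * polyDeg φ ^ n) ∧
        ((((minpoly (imageFractionSubfield φ)
            (algebraMap (MvPolynomial (Fin n) K) (FractionRing (MvPolynomial (Fin n) K)) g)).coeff i
          : imageFractionSubfield φ) : FractionRing (MvPolynomial (Fin n) K))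
          = algebraMap (MvPolynomial (Fin n) K) (FractionRing (MvPolynomial (Fin n) K)) (φ b)) := by
  have hφ : Function.Injective φ := by
    have h1 : φ = aeval (fun i => φ (X i)) := by
      ext i; simp
    rw [h1]
    exact hind
  have hd := PMPB.polyDeg_pos hn φ hφ
  obtain ⟨P, hP0, hPe, hPM⟩ := PMPB.exists_rel φ g hd hn
  obtain ⟨Q, hQm, hQr, hQe⟩ := hint
  intro i _
  let ι := algebraMap (MvPolynomial (Fin n) K) (FractionRing (MvPolynomial (Fin n) K))
  have hι : Function.Injective ι := IsFractionRing.injective _ _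
  let ψ0 : MvPolynomial (Fin n) K →+* FractionRing (MvPolynomial (Fin n) K) :=
    ι.comp (φ : MvPolynomial (Fin n) K →+* MvPolynomial (Fin n) K)
  let ψ : MvPolynomial (Fin n) K →+* imageFractionSubfield φ :=
    ψ0.codRestrict (imageFractionSubfield φ)
      (fun b => Subfield.subset_closure ⟨φ b, ⟨b, rfl⟩, rfl⟩)
  have hcomp : (algebraMap (imageFractionSubfield φ)
      (FractionRing (MvPolynomial (Fin n) K))).comp ψ = ψ0 := by
    ext1 <;> rfl
  have hψ : Function.Injective ψ := fun a b h => hφ (hι (congrArg Subtype.val h))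
  have hcl : Subring.closure (ι '' (φ.range : Set (MvPolynomial (Fin n) K))) ≤ ψ0.range := by
    rw [Subring.closure_le]
    rintro _ ⟨_, ⟨b, rfl⟩, rfl⟩
    exact ⟨b, rfl⟩
  have hfrac : ∀ z : imageFractionSubfield φ, ∃ x y, z = ψ x / ψ y := by
    rintro ⟨z, hz⟩
    obtain ⟨u, hu, v, hv, h⟩ := Subfield.mem_closure_iff.1 hz
    obtain ⟨x, rfl⟩ := hcl hu
    obtain ⟨y, rfl⟩ := hcl hv
    exact ⟨x, y, Subtype.ext h.symm⟩
  have key : ∀ R : Polynomial (MvPolynomial (Fin n) K),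
      R.eval₂ (φ : MvPolynomial (Fin n) K →+* MvPolynomial (Fin n) K) g = 0 →
      R.eval₂ ((algebraMap (imageFractionSubfield φ)
        (FractionRing (MvPolynomial (Fin n) K))).comp ψ) (ι g) = 0 := by
    intro R hR
    rw [hcomp, ← Polynomial.hom_eval₂, hR, map_zero]
  have hQ' : ∃ Q' : Polynomial (MvPolynomial (Fin n) K), Q'.Monic ∧
      Q'.map (φ : MvPolynomial (Fin n) K →+* MvPolynomial (Fin n) K) = Q := by
    have hl : Q ∈ Polynomial.lifts (φ : MvPolynomial (Fin n) K →+* MvPolynomial (Fin n) K) := by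
      rw [Polynomial.lifts_iff_coeff_lifts]
      intro k
      exact hQr k
    obtain ⟨Q', h1, _, h3⟩ := Polynomial.lifts_and_natDegree_eq_and_monic hl hQm
    exact ⟨Q', h3, h1⟩
  obtain ⟨Q', hQ'm, hQ'⟩ := hQ'
  have hQ'e : Q'.eval₂ (φ : MvPolynomial (Fin n) K →+* MvPolynomial (Fin n) K) g = 0 := by
    rw [← Polynomial.eval_map, hQ', hQe]
  obtain ⟨b, hb, hbe⟩ := PMPB.field_part ψ hψ hfrac (ι g) ⟨Q', hQ'm, key _ hQ'e⟩ P hP0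
    (key _ hPe) hPM i
  refine ⟨b, hb.trans (Nat.mul_le_mul_left _ ?_), ?_⟩
  · have h1 : 0 < polyDeg φ ^ n := pow_pos hd n
    have := Nat.le_mul_of_pos_right g.totalDegree h1
    omega
  · exact congrArg Subtype.val hbe
end

section
/- Let K be a field, B = K[x_1,…,x_n] with n > 0, φ: B → B a K-algebra endomorphism with A = φ(B), and set m = 2^n deg(φ)^{n−1} (n + deg(φ)^n). The following are equivalent: (i) φ is integral, i.e. B is integral over A; (ii) for each i = 1,…,n there exists a nonzero monic polynomial F_i ∈ A[T] of degree deg(φ)^n whose coefficients lie in φ(B_{≤m}) such that F_i(x_i) = 0. -/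
theorem aux_asc (d M c k : ℕ) (hd : 1 ≤ d) :
    M ^ k * (d * (M * c) + d * c + 1).ascFactorial k
      ≤ d ^ k * (M + 1) ^ k * (M * c + 1).ascFactorial k := by
  induction k with
  | zero => simp
  | succ k ih =>
    rw [Nat.ascFactorial_succ, Nat.ascFactorial_succ]
    have h : M * (d * (M * c) + d * c + 1 + k) ≤ d * (M + 1) * (M * c + 1 + k) := by
      obtain ⟨e, rfl⟩ := Nat.exists_eq_add_of_le hd
      nlinarith [Nat.zero_le (M * e), Nat.zero_le (M * e * k), Nat.zero_le (e * k)]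
    calc _ = (M * (d * (M * c) + d * c + 1 + k)) *
              (M ^ k * (d * (M * c) + d * c + 1).ascFactorial k) := by ring
      _ ≤ (d * (M + 1) * (M * c + 1 + k)) *
            (d ^ k * (M + 1) ^ k * (M * c + 1).ascFactorial k) := Nat.mul_le_mul h ih
      _ = _ := by ring

theorem aux_pow (M n : ℕ) (hM : 1 ≤ M) :
    M * (M + 1) ^ n + M ^ n ≤ M ^ n * (M + 2 ^ n) := by
  induction n with
  | zero => simp
  | succ n ih =>
    obtain ⟨e, rfl⟩ := Nat.exists_eq_add_of_le hM
    obtain ⟨t, ht⟩ : ∃ t, 2 ^ n = 1 + t := Nat.exists_eq_add_of_le Nat.one_le_two_pow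
    rw [pow_succ 2 n, ht]
    rw [ht] at ih
    rw [pow_succ, pow_succ]
    generalize (1 + e + 1) ^ n = P at *
    generalize (1 + e) ^ n = Q at *
    have h1 : (1 + e) * P ≤ Q * (1 + e + t) := by nlinarith
    nlinarith [Nat.mul_le_mul_right (1 + e + 1) h1, Nat.zero_le (Q * e * t)]

theorem aux_choose (d n : ℕ) (hd : 1 ≤ d) (hn : 0 < n) (N : ℕ)
    (hN : N = 2 ^ n * d ^ (n - 1) * (n + d ^ n)) :
    (d * N + d ^ n + n).choose n < (d ^ n + 1) * (N + n).choose n := by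
  set M := 2 ^ n * (n + d ^ n) with hM
  set c := d ^ (n - 1) with hc
  have hdc : d ^ n = d * c := by
    rw [hc, mul_comm, ← pow_succ, Nat.sub_add_cancel hn]
  have hNM : N = M * c := by rw [hN, hM]; ring
  have hM1 : 1 ≤ M := Nat.mul_pos (by positivity) (by positivity)
  have hDM : d ^ n * 2 ^ n ≤ M := by rw [hM]; nlinarith [Nat.zero_le (2 ^ n * n)]
  have h1 := aux_asc d M c n hd
  have h2 := aux_pow M n hM1
  rw [← hdc, ← hNM] at h1
  rw [Nat.ascFactorial_eq_factorial_mul_choose, Nat.ascFactorial_eq_factorial_mul_choose] at h1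
  have h3 : d ^ n * (M + 1) ^ n < (d ^ n + 1) * M ^ n := by
    have hDp : 0 < d ^ n * M ^ n := by positivity
    refine lt_of_mul_lt_mul_left (a := M) ?_ (Nat.zero_le _)
    have := Nat.mul_le_mul_left (d ^ n) h2
    have := Nat.mul_le_mul_right (M ^ n) hDM
    nlinarith
  have hcp : 0 < (N + n).choose n := Nat.choose_pos (by omega)
  have hf := n.factorial_pos
  refine lt_of_mul_lt_mul_left (a := M ^ n * n.factorial) ?_ (Nat.zero_le _)
  calc _ = M ^ n * (n.factorial * (d * N + d ^ n + n).choose n) := by ring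
    _ ≤ _ := h1
    _ = d ^ n * (M + 1) ^ n * (n.factorial * (N + n).choose n) := by ring
    _ < (d ^ n + 1) * M ^ n * (n.factorial * (N + n).choose n) :=
        Nat.mul_lt_mul_of_pos_right h3 (by positivity)
    _ = _ := by ring

theorem aux_sum_multichoose (n N : ℕ) :
    ∑ k ∈ Finset.range (N + 1), n.multichoose k = (N + n).choose n := by
  have h : ∑ k ∈ Finset.range (N + 1), n.multichoose k = (n + 1).multichoose N := by
    induction N with
    | zero => simp
    | succ N ih => rw [Finset.sum_range_succ, ih, Nat.multichoose_succ_succ, add_comm]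
  rw [h, Nat.multichoose_eq, show n + 1 + N - 1 = N + n by omega, Nat.choose_symm_add]

theorem aux_finrank (K : Type*) [Field K] (n N : ℕ) :
    Module.finrank K (MvPolynomial.restrictTotalDegree (Fin n) K N) = (N + n).choose n := by
  classical
  rw [← aux_sum_multichoose]
  refine (Module.finrank_eq_nat_card_basis (MvPolynomial.basisRestrictSupport K
    { s : Fin n →₀ ℕ | (s.sum fun _ e => e) ≤ N })).trans ?_
  have h : { s : Fin n →₀ ℕ | (s.sum fun _ e => e) ≤ N } =
      ((Finset.range (N + 1)).biUnion fun k => (Finset.univ : Finset (Fin n)).finsuppAntidiag k :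
        Finset (Fin n →₀ ℕ)) := by
    ext s
    simp [Finset.mem_finsuppAntidiag, Finsupp.sum_fintype, Nat.lt_succ_iff]
  rw [h]
  rw [Nat.card_coe_set_eq, Set.ncard_coe_finset, Finset.card_biUnion]
  · simp [Finset.card_finsuppAntidiag_nat_eq_multichoose]
  · intro a _ b _ hab
    rw [Function.onFun, Finset.disjoint_left]
    intro s hs hs'
    rw [Finset.mem_finsuppAntidiag] at hs hs'
    exact hab (hs.1.symm.trans hs'.1)

theorem aux_minpoly {R S : Type*} [CommRing R] [IsDomain R] [IsIntegrallyClosed R] [CommRing S]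
    [IsDomain S] (φ : R →+* S) (hφ : Function.Injective φ) (x : S) (hx : φ.IsIntegralElem x)
    (P : Polynomial R) (hP : P.eval₂ φ x = 0) :
    ∃ Q : Polynomial R, Q.Monic ∧ Q.eval₂ φ x = 0 ∧ Q ∣ P := by
  let _ := φ.toAlgebra
  have : Module.IsTorsionFree R S := by
    rw [Module.isTorsionFree_iff_algebraMap_injective]
    exact hφ
  have hx' : IsIntegral R x := hx
  exact ⟨minpoly R x, minpoly.monic hx', minpoly.aeval R x,
    minpoly.isIntegrallyClosed_dvd hx' hP⟩

/-- Swap the roles of the variables. -/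
noncomputable def auxSwap (K : Type*) [Field K] (n : ℕ) :
    Polynomial (MvPolynomial (Fin n) K) →+* MvPolynomial (Fin n) (Polynomial K) :=
  Polynomial.eval₂RingHom (MvPolynomial.map Polynomial.C) (MvPolynomial.C Polynomial.X)

theorem auxSwap_coeff (K : Type*) [Field K] (n : ℕ) (Q : Polynomial (MvPolynomial (Fin n) K))
    (s : Fin n →₀ ℕ) (j : ℕ) :
    ((auxSwap K n Q).coeff s).coeff j = (Q.coeff j).coeff s := by
  induction Q using Polynomial.induction_on' with
  | add p q hp hq => simp [hp, hq]
  | monomial k a =>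
    simp only [auxSwap, Polynomial.coe_eval₂RingHom, Polynomial.eval₂_monomial, ← map_pow,
      mul_comm _ (MvPolynomial.C _), MvPolynomial.coeff_C_mul, MvPolynomial.coeff_map,
      Polynomial.coeff_X_pow_mul', Polynomial.coeff_C, Polynomial.coeff_monomial]
    split_ifs <;> first | rfl | omega

theorem aux_degree_dvd (K : Type*) [Field K] (n N : ℕ)
    (P Q : Polynomial (MvPolynomial (Fin n) K)) (hP : P ≠ 0) (hQP : Q ∣ P)
    (h : ∀ j, (P.coeff j).totalDegree ≤ N) (j : ℕ) : (Q.coeff j).totalDegree ≤ N := by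
  have h1 : (auxSwap K n Q).totalDegree ≤ (auxSwap K n P).totalDegree := by
    refine MvPolynomial.totalDegree_le_of_dvd_of_isDomain (map_dvd _ hQP) fun h0 => hP ?_
    ext j s
    rw [← auxSwap_coeff, h0]
    simp
  have h2 : (auxSwap K n P).totalDegree ≤ N := by
    refine Finset.sup_le fun s hs => ?_
    rw [MvPolynomial.mem_support_iff] at hs
    obtain ⟨j, hj⟩ : ∃ j, ((auxSwap K n P).coeff s).coeff j ≠ 0 := by
      by_contra! hc
      exact hs (Polynomial.ext (by simpa using hc))
    rw [auxSwap_coeff, ← MvPolynomial.mem_support_iff] at hj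
    exact (MvPolynomial.le_totalDegree hj).trans (h j)
  refine Finset.sup_le fun s hs => ?_
  refine le_trans ?_ (h1.trans h2)
  refine MvPolynomial.le_totalDegree ?_
  rw [MvPolynomial.mem_support_iff] at hs ⊢
  intro h0
  rw [← auxSwap_coeff, h0] at hs
  simp at hs

theorem aux_totalDegree_map {K : Type*} [Field K] {n : ℕ}
    (φ : MvPolynomial (Fin n) K →ₐ[K] MvPolynomial (Fin n) K) (p : MvPolynomial (Fin n) K) :
    (φ p).totalDegree ≤ polyDeg φ * p.totalDegree := by
  conv_lhs => rw [p.as_sum, map_sum]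
  refine MvPolynomial.totalDegree_finsetSum_le fun s hs => ?_
  have hs' := MvPolynomial.le_totalDegree hs
  refine le_trans ?_ (Nat.mul_le_mul_left _ hs')
  rw [MvPolynomial.monomial_eq, map_mul, ← MvPolynomial.algebraMap_eq, AlgHom.commutes,
    MvPolynomial.algebraMap_eq]
  refine (MvPolynomial.totalDegree_mul _ _).trans ?_
  rw [MvPolynomial.totalDegree_C, zero_add, Finsupp.prod, map_prod, Finsupp.sum, Finset.mul_sum]
  refine (MvPolynomial.totalDegree_finsetProd _ _).trans (Finset.sum_le_sum fun i _ => ?_)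
  rw [map_pow, mul_comm]
  refine (MvPolynomial.totalDegree_pow _ _).trans (Nat.mul_le_mul_left _ ?_)
  exact Finset.le_sup (f := fun i : Fin n => (φ (MvPolynomial.X i)).totalDegree)
    (Finset.mem_univ i)

theorem aux_exists {K : Type*} [Field K] {n : ℕ}
    (φ : MvPolynomial (Fin n) K →ₐ[K] MvPolynomial (Fin n) K) (i : Fin n) (a N : ℕ)
    (h : (polyDeg φ * N + a + n).choose n < (a + 1) * (N + n).choose n) :
    ∃ P : Polynomial (MvPolynomial (Fin n) K), P ≠ 0 ∧ P.natDegree ≤ a ∧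
      (∀ j, (P.coeff j).totalDegree ≤ N) ∧
      P.eval₂ (φ : MvPolynomial (Fin n) K →+* MvPolynomial (Fin n) K) (MvPolynomial.X i) = 0 := by
  let V := MvPolynomial.restrictTotalDegree (Fin n) K N
  let W := MvPolynomial.restrictTotalDegree (Fin n) K (polyDeg φ * N + a)
  let g : (Fin (a + 1) → V) →ₗ[K] MvPolynomial (Fin n) K :=
    ∑ j : Fin (a + 1), (LinearMap.mulRight K (MvPolynomial.X i ^ (j : ℕ))) ∘ₗ φ.toLinearMap ∘ₗ
      V.subtype ∘ₗ LinearMap.proj j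
  have hg : ∀ v, g v = ∑ j : Fin (a + 1), φ (v j) * MvPolynomial.X i ^ (j : ℕ) := by
    intro v; simp [g, LinearMap.sum_apply]
  have hgW : ∀ v, g v ∈ W := by
    intro v
    rw [hg, MvPolynomial.mem_restrictTotalDegree]
    refine MvPolynomial.totalDegree_finsetSum_le fun j _ => ?_
    refine (MvPolynomial.totalDegree_mul _ _).trans ?_
    rw [MvPolynomial.totalDegree_X_pow]
    have h1 := aux_totalDegree_map φ (v j)
    have h2 := (MvPolynomial.mem_restrictTotalDegree _ _ _).1 (v j).2
    have h3 := Nat.mul_le_mul_left (polyDeg φ) h2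
    have := j.2
    omega
  have hker : LinearMap.ker (g.codRestrict W hgW) ≠ ⊥ := by
    refine LinearMap.ker_ne_bot_of_finrank_lt ?_
    rw [Module.finrank_pi_fintype, aux_finrank]
    simp only [V, aux_finrank]
    simpa using h
  obtain ⟨v, hv, hv0⟩ := Submodule.exists_mem_ne_zero_of_ne_bot hker
  have hv' : g v = 0 := by
    have := congrArg Subtype.val (LinearMap.mem_ker.1 hv)
    simpa using this
  have hco : ∀ k, (∑ j : Fin (a + 1), Polynomial.monomial (j : ℕ)
      (v j : MvPolynomial (Fin n) K)).coeff k = if hk : k < a + 1 then (v ⟨k, hk⟩).1 else 0 := by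
    intro k
    rw [Polynomial.finsetSum_coeff]
    simp only [Polynomial.coeff_monomial]
    split_ifs with hk
    · rw [Finset.sum_eq_single ⟨k, hk⟩]
      · simp
      · intro b _ hb
        rw [if_neg]
        intro hbk
        exact hb (Fin.ext hbk)
      · simp
    · refine Finset.sum_eq_zero fun j _ => if_neg ?_
      have := j.2
      omega
  refine ⟨∑ j : Fin (a + 1), Polynomial.monomial (j : ℕ) (v j : MvPolynomial (Fin n) K),
    ?_, ?_, ?_, ?_⟩
  · intro h0
    apply hv0
    funext j
    have := hco j
    rw [h0] at this
    simp only [Polynomial.coeff_zero, j.2, dif_pos] at this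
    exact Subtype.ext this.symm
  · rw [Polynomial.natDegree_le_iff_coeff_eq_zero]
    intro k hk
    rw [hco, dif_neg (by omega)]
  · intro k
    rw [hco]
    split_ifs
    · exact (MvPolynomial.mem_restrictTotalDegree _ _ _).1 (v _).2
    · simp
  · rw [Polynomial.eval₂_finsetSum]
    simp only [Polynomial.eval₂_monomial]
    rw [← hv', hg]
    rfl

theorem aux_injective {K : Type*} [Field K] {n : ℕ}
    (φ : MvPolynomial (Fin n) K →ₐ[K] MvPolynomial (Fin n) K)
    (h : (φ : MvPolynomial (Fin n) K →+* MvPolynomial (Fin n) K).IsIntegral) :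
    Function.Injective φ := by
  have hr : φ = MvPolynomial.aeval fun i => φ (MvPolynomial.X i) := by
    ext i; simp
  have hadj : ∀ p, φ p ∈ Algebra.adjoin K (Set.range fun i => φ (MvPolynomial.X i)) := by
    intro p
    rw [Algebra.adjoin_range_eq_range_aeval, ← hr]
    exact ⟨p, rfl⟩
  have : Algebra.IsAlgebraic (Algebra.adjoin K (Set.range fun i => φ (MvPolynomial.X i)))
      (MvPolynomial (Fin n) K) := by
    have : Algebra.IsIntegral (Algebra.adjoin K (Set.range fun i => φ (MvPolynomial.X i)))
      (MvPolynomial (Fin n) K) := by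
      constructor
      intro x
      obtain ⟨p, hp, hpx⟩ := h x
      refine ⟨p.map ((φ : MvPolynomial (Fin n) K →+* MvPolynomial (Fin n) K).codRestrict _ hadj),
        hp.map _, ?_⟩
      rw [Polynomial.eval₂_map]
      exact hpx
    infer_instance
  have hb := Algebra.IsAlgebraic.isTranscendenceBasis_of_lift_le_trdeg_of_finite K (fun i => φ (MvPolynomial.X i))
    (by rw [MvPolynomial.trdeg_of_isDomain]; simp)
  have := hb.1
  rw [algebraicIndependent_iff_injective_aeval, ← hr] at this
  exact this

open MvPolynomial in
/-- Let `K` be a field, `B = K[x_1, …, x_n]` with `n > 0`, `φ : B → B` a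
`K`-algebra endomorphism with `A = φ(B)`, and set `m = 2^n deg(φ)^{n−1} (n + deg(φ)^n)`.
The following are equivalent: (i) `φ` is integral, i.e. `B` is integral over `A`; (ii) for
each `i` there is a nonzero monic polynomial `F_i ∈ A[T]` of degree `deg(φ)^n` with
coefficients in `φ(B_{≤m})` such that `F_i(x_i) = 0`. -/
theorem polynomial_integral_iff_bounded_monic_equations (K : Type*) [Field K] (n : ℕ)
    (hn : 0 < n) (φ : MvPolynomial (Fin n) K →ₐ[K] MvPolynomial (Fin n) K) :
    (∀ b : MvPolynomial (Fin n) K, ∃ F : Polynomial (MvPolynomial (Fin n) K),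
        F.Monic ∧ (∀ k, F.coeff k ∈ φ.range) ∧ Polynomial.eval b F = 0)
      ↔
    (∀ i : Fin n, ∃ F : Polynomial (MvPolynomial (Fin n) K),
        F.Monic ∧ F.natDegree = polyDeg φ ^ n ∧
        (∀ k, ∃ b : MvPolynomial (Fin n) K,
          b.totalDegree ≤ 2 ^ n * polyDeg φ ^ (n - 1) * (n + polyDeg φ ^ n) ∧
          F.coeff k = φ b) ∧
        Polynomial.eval (X i) F = 0) := by
  classical
  constructor
  · intro H i
    have hint : (φ : MvPolynomial (Fin n) K →+* MvPolynomial (Fin n) K).IsIntegral := by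
      intro b
      obtain ⟨F, hF, hc, h0⟩ := H b
      have hl : F ∈ Polynomial.lifts (φ : MvPolynomial (Fin n) K →+* MvPolynomial (Fin n) K) := by
        rw [Polynomial.lifts_iff_coeff_lifts]
        exact hc
      obtain ⟨G, hG, -, hGm⟩ := Polynomial.lifts_and_natDegree_eq_and_monic hl hF
      exact ⟨G, hGm, by rw [← Polynomial.eval_map, hG, h0]⟩
    have hinj := aux_injective φ hint
    have hd : 1 ≤ polyDeg φ := by
      by_contra hd
      have h1 : (φ (X i)).totalDegree ≤ polyDeg φ := Finset.le_sup
        (f := fun i : Fin n => (φ (MvPolynomial.X i)).totalDegree) (Finset.mem_univ i)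
      have h2 : (φ (X i)).totalDegree = 0 := by omega
      rw [totalDegree_eq_zero_iff_eq_C] at h2
      have h3 : φ (X i) = φ (C (coeff 0 (φ (X i)))) := by
        rw [← algebraMap_eq, AlgHom.commutes, algebraMap_eq]
        exact h2
      have h4 := congrArg totalDegree (hinj h3)
      simp at h4
    obtain ⟨P, hP0, hPd, hPc, hPe⟩ := aux_exists φ i (polyDeg φ ^ n) _
      (aux_choose (polyDeg φ) n hd hn _ rfl)
    obtain ⟨Q, hQm, hQe, hQP⟩ := aux_minpoly
      (φ : MvPolynomial (Fin n) K →+* MvPolynomial (Fin n) K) hinj (X i) (hint _) P hPe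
    have hQc := aux_degree_dvd K n _ P Q hP0 hQP hPc
    have hQd : Q.natDegree ≤ polyDeg φ ^ n := (Polynomial.natDegree_le_of_dvd hQP hP0).trans hPd
    have hm : (Q * Polynomial.X ^ (polyDeg φ ^ n - Q.natDegree)).Monic :=
      hQm.mul (Polynomial.monic_X_pow _)
    refine ⟨(Q * Polynomial.X ^ (polyDeg φ ^ n - Q.natDegree)).map
      (φ : MvPolynomial (Fin n) K →+* MvPolynomial (Fin n) K), hm.map _, ?_, ?_, ?_⟩
    · rw [hm.natDegree_map, hQm.natDegree_mul (Polynomial.monic_X_pow _),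
        Polynomial.natDegree_X_pow]
      omega
    · intro k
      refine ⟨_, ?_, Polynomial.coeff_map _ _⟩
      rw [Polynomial.coeff_mul_X_pow']
      split_ifs
      · exact hQc _
      · simp
    · rw [Polynomial.eval_map, Polynomial.eval₂_mul, hQe, zero_mul]
  · intro H b
    have hX : ∀ i, (φ : MvPolynomial (Fin n) K →+* MvPolynomial (Fin n) K).IsIntegralElem
        (X i : MvPolynomial (Fin n) K) := by
      intro i
      obtain ⟨F, hF, -, hc, h0⟩ := H i
      have hl : F ∈ Polynomial.lifts (φ : MvPolynomial (Fin n) K →+* MvPolynomial (Fin n) K) := by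
        rw [Polynomial.lifts_iff_coeff_lifts]
        intro k
        obtain ⟨b, -, hb⟩ := hc k
        exact ⟨b, hb.symm⟩
      obtain ⟨G, hG, -, hGm⟩ := Polynomial.lifts_and_natDegree_eq_and_monic hl hF
      exact ⟨G, hGm, by rw [← Polynomial.eval_map, hG, h0]⟩
    have hb : (φ : MvPolynomial (Fin n) K →+* MvPolynomial (Fin n) K).IsIntegralElem b := by
      induction b using MvPolynomial.induction_on with
      | C a =>
        have : C a = (φ : MvPolynomial (Fin n) K →+* MvPolynomial (Fin n) K) (C a) := by
          rw [← algebraMap_eq]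
          exact (AlgHom.commutes φ a).symm
        rw [this]
        exact RingHom.isIntegralElem_map _
      | add p q hp hq => exact RingHom.IsIntegralElem.add _ hp hq
      | mul_X p i hp => exact RingHom.IsIntegralElem.mul _ hp (hX i)
    obtain ⟨G, hG, h0⟩ := hb
    refine ⟨G.map (φ : MvPolynomial (Fin n) K →+* MvPolynomial (Fin n) K), hG.map _, ?_, ?_⟩
    · intro k
      rw [Polynomial.coeff_map]
      exact ⟨_, rfl⟩
    · rw [Polynomial.eval_map, h0]
end
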